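/- Let X be an ∞-pseudo-metric space and r > 0. If each column of a subspace S×T-matrix ℳ of X is scale-r-disjoint and 𝒜 is a scale-r-disjoint subspace array of X indexed by T, then the array ℳ ·∩ 𝒜ᵀ, whose s-th entry is ⋃_{t∈T} ℳ(s,t) ∩ 𝒜(t), is scale-r-disjoint. -/

import Mathlib

open Set

/-- `C` and `D` are scale-`r`-disjoint: their open `r`-neighborhoods are disjoint. -/
def ScaleDisjoint {X : Type*} [PseudoEMetricSpace X] (r : ℝ) (C D : Set X) : Prop :=
  Metric.thickening r C ∩ Metric.thickening r D = ∅

section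

variable {X : Type*} [PseudoEMetricSpace X] {r : ℝ}

theorem scaleDisjoint_iff_disjoint_thickening {C D : Set X} :
    ScaleDisjoint r C D ↔ Disjoint (Metric.thickening r C) (Metric.thickening r D) :=
  disjoint_iff_inter_eq_empty.symm

theorem ScaleDisjoint.mono {C C' D D' : Set X} (h : ScaleDisjoint r C' D') (hC : C ⊆ C')
    (hD : D ⊆ D') : ScaleDisjoint r C D :=
  scaleDisjoint_iff_disjoint_thickening.2 <| (scaleDisjoint_iff_disjoint_thickening.1 h).mono
    (Metric.thickening_subset_of_subset r hC) (Metric.thickening_subset_of_subset r hD)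

theorem scaleDisjoint_iUnion_iUnion_iff {ι κ : Sort*} {C : ι → Set X} {D : κ → Set X} :
    ScaleDisjoint r (⋃ i, C i) (⋃ k, D k) ↔ ∀ i k, ScaleDisjoint r (C i) (D k) := by
  simp only [scaleDisjoint_iff_disjoint_thickening, Metric.thickening_iUnion,
    disjoint_iUnion_left, disjoint_iUnion_right]
  exact forall_comm

end

/-- Let `X` be an `∞`-pseudo-metric space and `r > 0`. If each column of a subspace
`S×T`-matrix `M` of `X` is scale-`r`-disjoint and `A` is a scale-`r`-disjoint subspace array of
`X` indexed by `T`, then the array `M ·∩ Aᵀ`, whose `s`-th entry is `⋃ t, M s t ∩ A t`, is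
scale-`r`-disjoint. -/
theorem matInterProd_array_scaleDisjoint {X S T : Type*} [PseudoEMetricSpace X] (r : ℝ)
    (hr : 0 < r) (M : S → T → Set X) (A : T → Set X)
    (hM : ∀ t : T, ∀ s s' : S, s ≠ s' → ScaleDisjoint r (M s t) (M s' t))
    (hA : ∀ t t' : T, t ≠ t' → ScaleDisjoint r (A t) (A t')) :
    ∀ s s' : S, s ≠ s' →
      ScaleDisjoint r (⋃ t : T, M s t ∩ A t) (⋃ t : T, M s' t ∩ A t) := by
  intro s s' hs
  refine scaleDisjoint_iUnion_iUnion_iff.2 fun t t' => ?_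
  obtain rfl | htt' := eq_or_ne t t'
  · exact (hM t s s' hs).mono inter_subset_left inter_subset_left
  · exact (hA t t' htt').mono inter_subset_right inter_subset_right
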